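/- Let V be a Killing vector field on the Kähler base, i.e. L_V g = 0. Then its lift V^L to the Sasakian lift satisfies (L_{V^L} g^L)(X^L, Y^L) = 0 and (L_{V^L} g^L)(ξ, X^L) = 2Φ(V^L, X^L) for all vector fields X, Y on the base, where Φ is the fundamental 2-form of the lift. Moreover, if V is an infinitesimal automorphism of the Kähler form (L_V ω = 0), then L_{V^L} Φ = 0, and the 1-form L_{V^L} η is closed. -/

import Mathlib

/-!
Abstract framework for (local) differential geometry, following the standard
algebraic formulation: smooth functions form a commutative `ℝ`-algebra `F`,
vector fields form an `F`-module `V` equipped with a Lie bracket and a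
directional derivative (derivation) action on functions.  Metrics, connections,
curvature, Ricci tensors (via orthonormal frames), Lie derivatives, exterior
derivatives, almost contact metric / Sasakian structures, Kähler structures,
`D_{α,β}`-homotheties, twisted `η`-Ricci solitons, and the Sasakian lift of a
Kähler base are all expressed in this language.
-/

/-- The calculus of vector fields on a manifold: a Lie bracket and a
directional-derivative action of vector fields on functions, with the usual
rules. -/
structure VectorCalculus (F : Type*) (V : Type*) [CommRing F] [Algebra ℝ F]
    [AddCommGroup V] [Module F V] where
  bracket : V → V → V
  deriv : V → F → F
  bracket_antisymm : ∀ X Y, bracket X Y = - bracket Y X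
  bracket_add_left : ∀ X Y Z, bracket (X + Y) Z = bracket X Z + bracket Y Z
  bracket_smul_left : ∀ (f : F) (X Y : V),
      bracket (f • X) Y = f • bracket X Y - deriv Y f • X
  jacobi : ∀ X Y Z,
      bracket X (bracket Y Z) + bracket Y (bracket Z X) + bracket Z (bracket X Y) = 0
  deriv_add : ∀ (X : V) (f g : F), deriv X (f + g) = deriv X f + deriv X g
  deriv_mul : ∀ (X : V) (f g : F), deriv X (f * g) = deriv X f * g + f * deriv X g
  deriv_add_left : ∀ (X Y : V) (f : F), deriv (X + Y) f = deriv X f + deriv Y f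
  deriv_smul_left : ∀ (f : F) (X : V) (h : F), deriv (f • X) h = f * deriv X h
  deriv_const : ∀ (X : V) (r : ℝ), deriv X (algebraMap ℝ F r) = 0
  deriv_bracket : ∀ (X Y : V) (f : F),
      deriv (bracket X Y) f = deriv X (deriv Y f) - deriv Y (deriv X f)

section Defs

variable {F : Type*} {V : Type*} [CommRing F] [Algebra ℝ F]
  [AddCommGroup V] [Module F V]

/-- A (pseudo-)Riemannian metric: a symmetric `F`-bilinear form on vector fields. -/
structure IsMetric (g : V → V → F) : Prop where
  symm : ∀ X Y, g X Y = g Y X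
  add_left : ∀ X Y Z, g (X + Y) Z = g X Z + g Y Z
  smul_left : ∀ (f : F) (X Y : V), g (f • X) Y = f * g X Y

/-- `nabla` is the Levi-Civita connection of the metric `g`: an affine,
torsion-free, metric-compatible connection. -/
structure IsLeviCivita (C : VectorCalculus F V) (g : V → V → F)
    (nabla : V → V → V) : Prop where
  add_left : ∀ X Y Z, nabla (X + Y) Z = nabla X Z + nabla Y Z
  smul_left : ∀ (f : F) (X Y : V), nabla (f • X) Y = f • nabla X Y
  add_right : ∀ X Y Z, nabla X (Y + Z) = nabla X Y + nabla X Z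
  leibniz : ∀ (X : V) (f : F) (Y : V),
      nabla X (f • Y) = C.deriv X f • Y + f • nabla X Y
  torsion_free : ∀ X Y, nabla X Y - nabla Y X = C.bracket X Y
  compat : ∀ X Y Z, C.deriv X (g Y Z) = g (nabla X Y) Z + g Y (nabla X Z)

/-- Riemann curvature operator `R_{X Y} Z = ∇_X ∇_Y Z - ∇_Y ∇_X Z - ∇_{[X,Y]} Z`. -/
def curv (C : VectorCalculus F V) (nabla : V → V → V) (X Y Z : V) : V :=
  nabla X (nabla Y Z) - nabla Y (nabla X Z) - nabla (C.bracket X Y) Z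

/-- An orthonormal spanning frame for the metric `g`. -/
def IsOrthFrame (g : V → V → F) {m : ℕ} (E : Fin m → V) : Prop :=
  (∀ i j, g (E i) (E j) = if i = j then (1 : F) else 0) ∧
  (∀ X : V, X = ∑ i, g X (E i) • E i)

/-- Ricci tensor, computed as the trace of the curvature in the orthonormal
frame `E`:  `Ric(Y,Z) = ∑ᵢ g(R_{Eᵢ Y} Z, Eᵢ)`. -/
def ricci (C : VectorCalculus F V) (nabla : V → V → V) {m : ℕ} (E : Fin m → V)
    (g : V → V → F) (Y Z : V) : F :=
  ∑ i, g (curv C nabla (E i) Y Z) (E i)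

/-- Scalar curvature: trace of the Ricci tensor in the frame `E`. -/
def scalarCurv (C : VectorCalculus F V) (nabla : V → V → V) {m : ℕ}
    (E : Fin m → V) (g : V → V → F) : F :=
  ∑ i, ricci C nabla E g (E i) (E i)

/-- Lie derivative of a metric (symmetric 2-tensor):
`(L_X g)(Y,Z) = X g(Y,Z) - g([X,Y],Z) - g(Y,[X,Z])`. -/
def lieDerivMetric (C : VectorCalculus F V) (X : V) (g : V → V → F) (Y Z : V) : F :=
  C.deriv X (g Y Z) - g (C.bracket X Y) Z - g Y (C.bracket X Z)

/-- Lie derivative of a 1-form: `(L_X η)(Y) = X η(Y) - η([X,Y])`. -/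
def lieDerivOneForm (C : VectorCalculus F V) (X : V) (eta : V → F) (Y : V) : F :=
  C.deriv X (eta Y) - eta (C.bracket X Y)

/-- Lie derivative of a (1,1)-tensor field: `(L_X φ)(Y) = [X, φY] - φ[X,Y]`. -/
def lieDerivEndo (C : VectorCalculus F V) (X : V) (phi : V → V) (Y : V) : V :=
  C.bracket X (phi Y) - phi (C.bracket X Y)

/-- Lie derivative of a 2-form. -/
def lieDerivTwoForm (C : VectorCalculus F V) (X : V) (Th : V → V → F) (Y Z : V) : F :=
  C.deriv X (Th Y Z) - Th (C.bracket X Y) Z - Th Y (C.bracket X Z)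

/-- Exterior derivative of a 1-form (Blair's convention, with the factor `1/2`):
`dη(X,Y) = (1/2)(X η(Y) - Y η(X) - η([X,Y]))`. -/
noncomputable def extDerivOneForm (C : VectorCalculus F V) (eta : V → F) (X Y : V) : F :=
  (1/2 : ℝ) • (C.deriv X (eta Y) - C.deriv Y (eta X) - eta (C.bracket X Y))

/-- A 1-form is closed iff `X a(Y) - Y a(X) - a([X,Y]) = 0` for all `X, Y`. -/
def IsClosedOneForm (C : VectorCalculus F V) (a : V → F) : Prop :=
  ∀ X Y, C.deriv X (a Y) - C.deriv Y (a X) - a (C.bracket X Y) = 0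

/-- A 2-form is closed iff its exterior derivative vanishes. -/
def IsClosedTwoForm (C : VectorCalculus F V) (Th : V → V → F) : Prop :=
  ∀ X Y Z,
    C.deriv X (Th Y Z) - C.deriv Y (Th X Z) + C.deriv Z (Th X Y)
      - Th (C.bracket X Y) Z + Th (C.bracket X Z) Y - Th (C.bracket Y Z) X = 0

/-- Nijenhuis torsion of a (1,1)-tensor field `S`:
`N_S(X,Y) = S²[X,Y] + [SX,SY] - S([SX,Y]) - S([X,SY])`. -/
def nijenhuis (C : VectorCalculus F V) (S : V → V) (X Y : V) : V :=
  S (S (C.bracket X Y)) + C.bracket (S X) (S Y)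
    - S (C.bracket (S X) Y) - S (C.bracket X (S Y))

/-- An almost contact metric structure `(φ, ξ, η, g)`. -/
structure IsAlmostContactMetric (phi : V → V) (xi : V) (eta : V → F)
    (g : V → V → F) : Prop where
  metric : IsMetric g
  phi_add : ∀ X Y, phi (X + Y) = phi X + phi Y
  phi_smul : ∀ (f : F) (X : V), phi (f • X) = f • phi X
  eta_add : ∀ X Y, eta (X + Y) = eta X + eta Y
  eta_smul : ∀ (f : F) (X : V), eta (f • X) = f * eta X
  phi_sq : ∀ X, phi (phi X) = -X + eta X • xi
  eta_xi : eta xi = 1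
  compat : ∀ X Y, g (phi X) (phi Y) = g X Y - eta X * eta Y

/-- A Sasakian structure: an almost contact metric structure whose Levi-Civita
connection `nabla` satisfies `(∇_X φ)Y = g(X,Y) ξ - η(Y) X`. -/
def IsSasakianWith (C : VectorCalculus F V) (phi : V → V) (xi : V) (eta : V → F)
    (g : V → V → F) (nabla : V → V → V) : Prop :=
  IsAlmostContactMetric phi xi eta g ∧ IsLeviCivita C g nabla ∧
    ∀ X Y, nabla X (phi Y) - phi (nabla X Y) = g X Y • xi - eta Y • X

/-- Symmetric tensor product of two 1-forms:
`(a ⊙ b)(Y,Z) = (1/2)(a(Y) b(Z) + a(Z) b(Y))`. -/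
noncomputable def symProd (a b : V → F) (Y Z : V) : F := (1/2 : ℝ) • (a Y * b Z + a Z * b Y)

/-- Twisted `η`-Ricci soliton with data `(X, λ, C₁, C₂)`:
`η(X) = 0` and `Ric + (1/2) L_X g = λ g + 2 C₁ (L_X η) ⊙ η + C₂ η ⊗ η`. -/
def IsTwistedEtaRicciSoliton (C : VectorCalculus F V) (g : V → V → F)
    (eta : V → F) (Ric : V → V → F) (X : V) (lam C1 C2 : ℝ) : Prop :=
  eta X = 0 ∧
  ∀ Y Z, Ric Y Z + (1/2 : ℝ) • lieDerivMetric C X g Y Z =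
    lam • g Y Z + (2 * C1) • symProd (lieDerivOneForm C X eta) eta Y Z
      + C2 • (eta Y * eta Z)

/-- A Kähler structure `(J, g)` with Levi-Civita connection `nabla`. -/
structure IsKaehler (C : VectorCalculus F V) (J : V → V) (g : V → V → F)
    (nabla : V → V → V) : Prop where
  metric : IsMetric g
  lc : IsLeviCivita C g nabla
  J_add : ∀ X Y, J (X + Y) = J X + J Y
  J_smul : ∀ (f : F) (X : V), J (f • X) = f • J X
  J_sq : ∀ X, J (J X) = -X
  hermitian : ∀ X Y, g (J X) (J Y) = g X Y
  parallel : ∀ X Y, nabla X (J Y) = J (nabla X Y)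

/-- The metric of the `D_{α,β}`-homothety: `g' = α g + (β² - α) η ⊗ η`. -/
def dHomMetric (g : V → V → F) (eta : V → F) (α β : ℝ) (X Y : V) : F :=
  α • g X Y + (β ^ 2 - α) • (eta X * eta Y)

/-- The 1-form of the `D_{α,β}`-homothety: `η' = β η`. -/
def dHomEta (eta : V → F) (β : ℝ) (X : V) : F := β • eta X

end Defs

section DefsR

variable {F : Type*} {V : Type*} [CommRing F] [Algebra ℝ F]
  [AddCommGroup V] [Module F V] [Module ℝ V] [IsScalarTower ℝ F V]

/-- The Reeb field of the `D_{α,β}`-homothety: `ξ' = (1/β) ξ`. -/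
noncomputable def dHomXi (xi : V) (β : ℝ) : V := β⁻¹ • xi

/-- A `c`-Sasakian structure (`c` a real constant): an almost contact metric
structure whose Levi-Civita connection satisfies
`(∇_X φ)Y = c (g(X,Y) ξ - η(Y) X)`. -/
def IsCSasakianWith (C : VectorCalculus F V) (phi : V → V) (xi : V)
    (eta : V → F) (g : V → V → F) (nabla : V → V → V) (c : ℝ) : Prop :=
  IsAlmostContactMetric phi xi eta g ∧ IsLeviCivita C g nabla ∧
    ∀ X Y, nabla X (phi Y) - phi (nabla X Y) = c • (g X Y • xi - eta Y • X)

end DefsR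

/-- The Sasakian lift of a Kähler base `(N, J, g)` to `M = ℝ × N`, presented
axiomatically:  `liftF` is the pullback of functions along `π₂`, `liftV` is the
lift of vector fields `X ↦ X^L = X - (τ(X)∘π₂) ξ`, `ξ = ∂_t`, `η = dt + π₂*τ`,
`φ X^L = (JX)^L`, `φ ξ = 0`, `g^L = η ⊗ η + π₂* g`.  The structure fields
record exactly the identities satisfied by this construction. -/
structure SasakianLiftData
    {Fb : Type*} {Vb : Type*} [CommRing Fb] [Algebra ℝ Fb]
    [AddCommGroup Vb] [Module Fb Vb]
    {Fm : Type*} {Vm : Type*} [CommRing Fm] [Algebra ℝ Fm]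
    [AddCommGroup Vm] [Module Fm Vm]
    (Cb : VectorCalculus Fb Vb) (Cm : VectorCalculus Fm Vm)
    (J : Vb → Vb) (gb : Vb → Vb → Fb) where
  liftF : Fb →ₐ[ℝ] Fm
  liftV : Vb → Vm
  xi : Vm
  eta : Vm → Fm
  phi : Vm → Vm
  gL : Vm → Vm → Fm
  liftV_add : ∀ X Y, liftV (X + Y) = liftV X + liftV Y
  liftV_smul : ∀ (f : Fb) (X : Vb), liftV (f • X) = liftF f • liftV X
  eta_add : ∀ W W', eta (W + W') = eta W + eta W'
  eta_smul : ∀ (f : Fm) (W : Vm), eta (f • W) = f * eta W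
  phi_add : ∀ W W', phi (W + W') = phi W + phi W'
  phi_smul : ∀ (f : Fm) (W : Vm), phi (f • W) = f • phi W
  gL_metric : IsMetric gL
  eta_xi : eta xi = 1
  eta_lift : ∀ X, eta (liftV X) = 0
  phi_lift : ∀ X, phi (liftV X) = liftV (J X)
  phi_xi : phi xi = 0
  gL_lift : ∀ X Y, gL (liftV X) (liftV Y) = liftF (gb X Y)
  gL_xi : ∀ W, gL xi W = eta W
  bracket_lift : ∀ X Y, Cm.bracket (liftV X) (liftV Y)
      = liftV (Cb.bracket X Y) - ((2 : Fm) * liftF (gb X (J Y))) • xi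
  bracket_xi_lift : ∀ X, Cm.bracket xi (liftV X) = 0
  deriv_lift : ∀ (X : Vb) (f : Fb),
      Cm.deriv (liftV X) (liftF f) = liftF (Cb.deriv X f)
  deriv_xi : ∀ f : Fb, Cm.deriv xi (liftF f) = 0
  spanning : ∀ W : Vm, ∃ (k : ℕ) (a : Fin k → Fm) (X : Fin k → Vb),
      W = eta W • xi + ∑ i, a i • liftV (X i)


theorem SasLift.ind
    {Fb Vb Fm Vm : Type*} [CommRing Fb] [Algebra ℝ Fb]
    [AddCommGroup Vb] [Module Fb Vb]
    [CommRing Fm] [Algebra ℝ Fm] [AddCommGroup Vm] [Module Fm Vm]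
    {Cb : VectorCalculus Fb Vb} {Cm : VectorCalculus Fm Vm}
    {J : Vb → Vb} {gb : Vb → Vb → Fb}
    (L : SasakianLiftData Cb Cm J gb) (P : Vm → Prop)
    (hadd : ∀ A B, P A → P B → P (A + B))
    (hsmul : ∀ (f : Fm) A, P A → P (f • A))
    (hxi : P L.xi) (hl : ∀ X, P (L.liftV X)) (W : Vm) : P W := by
  obtain ⟨k, a, X, h⟩ := L.spanning W
  rw [h]
  refine hadd _ _ (hsmul _ _ hxi) ?_
  refine Finset.sum_induction _ P hadd ?_ (fun i _ => hsmul _ _ (hl _))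
  simpa using hsmul 0 _ hxi

section SasLiftCalc

variable {F V : Type*} [CommRing F] [Algebra ℝ F] [AddCommGroup V] [Module F V]
  (C : VectorCalculus F V)

theorem VectorCalculus.bracket_add_right' (X Y Z : V) :
    C.bracket X (Y + Z) = C.bracket X Y + C.bracket X Z := by
  rw [C.bracket_antisymm, C.bracket_add_left, C.bracket_antisymm Y, C.bracket_antisymm Z]
  abel

theorem VectorCalculus.bracket_smul_right' (f : F) (X Y : V) :
    C.bracket X (f • Y) = f • C.bracket X Y + C.deriv X f • Y := by
  rw [C.bracket_antisymm, C.bracket_smul_left, C.bracket_antisymm Y]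
  simp only [smul_neg]
  abel

theorem VectorCalculus.deriv_zero' (X : V) : C.deriv X 0 = 0 := by
  simpa using C.deriv_add X 0 0

theorem VectorCalculus.deriv_one' (X : V) : C.deriv X 1 = 0 := by
  simpa using C.deriv_const X 1

theorem VectorCalculus.deriv_neg' (X : V) (f : F) : C.deriv X (-f) = -C.deriv X f := by
  have h := C.deriv_add X f (-f)
  rw [add_neg_cancel, C.deriv_zero'] at h
  linear_combination -h

theorem VectorCalculus.deriv_sub' (X : V) (f g : F) :
    C.deriv X (f - g) = C.deriv X f - C.deriv X g := by
  rw [sub_eq_add_neg, C.deriv_add, C.deriv_neg', sub_eq_add_neg]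

theorem VectorCalculus.deriv_two' (X : V) : C.deriv X 2 = 0 := by
  rw [← one_add_one_eq_two, C.deriv_add, C.deriv_one', add_zero]

/-- Commutation of the Lie derivative with the exterior derivative on one-forms. -/
theorem closed_of_lie (eta : V → F) (hadd : ∀ A B, eta (A + B) = eta A + eta B)
    (hsmul : ∀ (f : F) A, eta (f • A) = f * eta A)
    (Th : V → V → F)
    (hd : ∀ A B, C.deriv A (eta B) - C.deriv B (eta A) - eta (C.bracket A B) = 2 * Th A B)
    (U : V) (hT : ∀ A B, lieDerivTwoForm C U Th A B = 0) :
    IsClosedOneForm C (fun W => lieDerivOneForm C U eta W) := by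
  have hneg : ∀ A, eta (-A) = - eta A := fun A => by
    have := hsmul (-1) A
    simpa using this
  intro A B
  have hj := congrArg eta (C.jacobi U A B)
  have h0 : eta 0 = 0 := by simpa using hsmul 0 0
  rw [C.bracket_antisymm B U, C.bracket_antisymm A (-C.bracket U B),
    C.bracket_antisymm B (C.bracket U A), hadd, hadd, h0] at hj
  have e1 : C.bracket (-C.bracket U B) A = - C.bracket (C.bracket U B) A := by
    have := C.bracket_smul_left (-1) (C.bracket U B) A
    simpa [C.deriv_neg', C.deriv_one'] using this
  rw [e1, neg_neg, C.bracket_antisymm (C.bracket U B) A] at hj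
  simp only [hneg] at hj
  have h1 := congrArg (C.deriv U) (hd A B)
  simp only [C.deriv_sub', C.deriv_mul, C.deriv_two'] at h1
  have h2 := hd (C.bracket U A) B
  have h3 := hd A (C.bracket U B)
  have h4 := hT A B
  simp only [lieDerivTwoForm] at h4
  simp only [C.deriv_bracket] at h2 h3
  simp only [lieDerivOneForm, C.deriv_sub', C.deriv_bracket]
  linear_combination h1 - h2 - h3 + 2 * h4 + hj

end SasLiftCalc

/-- If `V` is Killing on the Kähler base, its lift satisfies
`(L_{V^L} g^L)(X^L,Y^L) = 0` and `(L_{V^L} g^L)(ξ, X^L) = 2 Φ(V^L, X^L)`.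
Moreover, if `L_V ω = 0`, then `L_{V^L} Φ = 0` and `L_{V^L} η` is closed. -/
theorem lift_of_killing_field
    {Fb Vb Fm Vm : Type*} [CommRing Fb] [Algebra ℝ Fb]
    [AddCommGroup Vb] [Module Fb Vb]
    [CommRing Fm] [Algebra ℝ Fm] [AddCommGroup Vm] [Module Fm Vm]
    (Cb : VectorCalculus Fb Vb) (Cm : VectorCalculus Fm Vm)
    (J : Vb → Vb) (gb : Vb → Vb → Fb) (nablab : Vb → Vb → Vb)
    (hK : IsKaehler Cb J gb nablab)
    (L : SasakianLiftData Cb Cm J gb)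
    (Vf : Vb)
    (hKill : ∀ X Y : Vb, lieDerivMetric Cb Vf gb X Y = 0) :
    (∀ X Y : Vb, lieDerivMetric Cm (L.liftV Vf) L.gL (L.liftV X) (L.liftV Y) = 0) ∧
    (∀ X : Vb, lieDerivMetric Cm (L.liftV Vf) L.gL L.xi (L.liftV X)
        = (2 : Fm) * L.gL (L.liftV Vf) (L.phi (L.liftV X))) ∧
    ((∀ X Y : Vb, lieDerivTwoForm Cb Vf (fun A B => gb A (J B)) X Y = 0) →
      (∀ W W' : Vm,
        lieDerivTwoForm Cm (L.liftV Vf) (fun A B => L.gL A (L.phi B)) W W' = 0) ∧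
      IsClosedOneForm Cm (fun W => lieDerivOneForm Cm (L.liftV Vf) L.eta W)) := by
  have gs := L.gL_metric.symm
  have gal := L.gL_metric.add_left
  have gsl := L.gL_metric.smul_left
  have gar : ∀ X Y Z, L.gL X (Y + Z) = L.gL X Y + L.gL X Z := fun X Y Z => by
    rw [gs, gal, gs Y, gs Z]
  have gsr : ∀ (f : Fm) X Y, L.gL X (f • Y) = f * L.gL X Y := fun f X Y => by
    rw [gs, gsl, gs Y]
  have glx : ∀ X, L.gL (L.liftV X) L.xi = 0 := fun X => by rw [gs, L.gL_xi, L.eta_lift]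
  have gxl : ∀ X, L.gL L.xi (L.liftV X) = 0 := fun X => by rw [L.gL_xi, L.eta_lift]
  have blx : ∀ X, Cm.bracket (L.liftV X) L.xi = 0 := fun X => by
    rw [Cm.bracket_antisymm, L.bracket_xi_lift, neg_zero]
  have g0l : ∀ X, L.gL 0 X = 0 := fun X => by simpa using gsl 0 0 X
  have g0r : ∀ X, L.gL X 0 = 0 := fun X => by simpa using gsr 0 X 0
  have e0 : L.eta 0 = 0 := by simpa using L.eta_smul 0 0
  have bl : ∀ X Y, Cm.bracket (L.liftV X) (L.liftV Y)
      = L.liftV (Cb.bracket X Y) + (-((2 : Fm) * L.liftF (gb X (J Y)))) • L.xi := fun X Y => by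
    rw [L.bracket_lift, neg_smul, sub_eq_add_neg]
  have bss : ∀ X, Cm.bracket X X = 0 := fun X => by
    have h : Cm.bracket X X + Cm.bracket X X = 0 := by
      nth_rewrite 1 [Cm.bracket_antisymm X X]
      exact neg_add_cancel _
    have h2 : (algebraMap ℝ Fm 2) • Cm.bracket X X = 0 := by
      rw [← one_add_one_eq_two, map_add, map_one, add_smul, one_smul]
      exact h
    have h3 := congrArg (fun v => (algebraMap ℝ Fm (1/2)) • v) h2
    simp only [smul_smul, ← map_mul, smul_zero] at h3
    norm_num at h3
    exact h3
  have ephi : ∀ W, L.eta (L.phi W) = 0 := by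
    refine SasLift.ind L _ ?_ ?_ ?_ ?_
    · intro A B hA hB
      rw [L.phi_add, L.eta_add, hA, hB, add_zero]
    · intro f A hA
      rw [L.phi_smul, L.eta_smul, hA, mul_zero]
    · rw [L.phi_xi, e0]
    · intro X
      rw [L.phi_lift, L.eta_lift]
  refine ⟨?_, ?_, ?_⟩
  · intro X Y
    have h := congrArg L.liftF (hKill X Y)
    simp only [lieDerivMetric, map_sub, map_zero] at h
    simp only [lieDerivMetric, L.gL_lift, bl, L.deriv_lift, gal, gar, gsl, gsr, gxl, glx]
    linear_combination h
  · intro X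
    simp only [lieDerivMetric, gxl, blx, bl, gar, gsr, g0l, L.phi_lift, L.gL_lift,
      Cm.deriv_zero']
    rw [L.gL_xi, L.eta_xi]
    ring
  · intro hω
    have hΦ : ∀ W W' : Vm,
        lieDerivTwoForm Cm (L.liftV Vf) (fun A B => L.gL A (L.phi B)) W W' = 0 := by
      intro W W'
      revert W
      refine SasLift.ind L _ ?_ ?_ ?_ ?_
      · intro A B hA hB
        simp only [lieDerivTwoForm, gal, Cm.bracket_add_right', Cm.deriv_add] at hA hB ⊢
        linear_combination hA + hB
      · intro f A hA
        simp only [lieDerivTwoForm, gal, gsl, Cm.bracket_smul_right', Cm.deriv_mul] at hA ⊢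
        linear_combination f * hA
      · simp only [lieDerivTwoForm, L.gL_xi, ephi, blx, g0l, Cm.deriv_zero', sub_zero]
      · intro X
        revert W'
        refine SasLift.ind L _ ?_ ?_ ?_ ?_
        · intro A B hA hB
          simp only [lieDerivTwoForm, gar, L.phi_add, Cm.bracket_add_right',
            Cm.deriv_add] at hA hB ⊢
          linear_combination hA + hB
        · intro f A hA
          simp only [lieDerivTwoForm, gar, gsr, L.phi_add, L.phi_smul, Cm.bracket_smul_right',
            Cm.deriv_mul] at hA ⊢
          linear_combination f * hA
        · have p0 : L.phi 0 = 0 := by simpa using L.phi_smul 0 0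
          simp only [lieDerivTwoForm, L.phi_xi, blx, p0, g0r, Cm.deriv_zero', sub_zero]
        · intro Y
          have h := congrArg L.liftF (hω X Y)
          simp only [lieDerivTwoForm, map_sub, map_zero] at h
          simp only [lieDerivTwoForm, L.phi_lift, L.phi_add, L.phi_smul, L.phi_xi, L.gL_lift, bl,
            L.deriv_lift, gal, gar, gsl, gsr, gxl, glx, g0r]
          linear_combination h
    refine ⟨hΦ, closed_of_lie Cm L.eta L.eta_add L.eta_smul _ ?_ _ hΦ⟩
    intro W W'
    revert W
    refine SasLift.ind L _ ?_ ?_ ?_ ?_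
    · intro A B hA hB
      simp only [gal, L.eta_add, Cm.bracket_add_left, Cm.deriv_add, Cm.deriv_add_left] at hA hB ⊢
      linear_combination hA + hB
    · intro f A hA
      have hb : Cm.bracket (f • A) W'
          = f • Cm.bracket A W' + (-Cm.deriv W' f) • A := by
        rw [Cm.bracket_smul_left, neg_smul, sub_eq_add_neg]
      simp only [gsl, L.eta_add, L.eta_smul, hb, Cm.deriv_mul, Cm.deriv_smul_left] at hA ⊢
      linear_combination f * hA
    · simp only [L.gL_xi, ephi]
      revert W'
      refine SasLift.ind L _ ?_ ?_ ?_ ?_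
      · intro A B hA hB
        simp only [L.eta_add, Cm.bracket_add_right', Cm.deriv_add, Cm.deriv_add_left] at hA hB ⊢
        linear_combination hA + hB
      · intro f A hA
        simp only [L.eta_add, L.eta_smul, L.eta_xi, Cm.bracket_smul_right', Cm.deriv_mul,
          Cm.deriv_smul_left] at hA ⊢
        linear_combination f * hA
      · simp only [bss, e0]
        ring
      · intro X
        simp only [L.eta_lift, L.eta_xi, L.bracket_xi_lift, e0, Cm.deriv_zero', Cm.deriv_one']
        ring
    · intro X
      revert W'
      refine SasLift.ind L _ ?_ ?_ ?_ ?_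
      · intro A B hA hB
        simp only [gar, L.phi_add, L.eta_add, Cm.bracket_add_right', Cm.deriv_add,
          Cm.deriv_add_left] at hA hB ⊢
        linear_combination hA + hB
      · intro f A hA
        simp only [gsr, L.phi_smul, L.eta_add, L.eta_smul, Cm.bracket_smul_right', Cm.deriv_mul,
          Cm.deriv_smul_left] at hA ⊢
        linear_combination f * hA
      · simp only [L.eta_lift, L.eta_xi, blx, e0, Cm.deriv_zero', Cm.deriv_one', L.phi_xi, g0r]
        ring
      · intro Y
        simp only [L.eta_lift, bl, L.eta_add, L.eta_smul, L.eta_xi, Cm.deriv_zero', L.phi_lift,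
          L.gL_lift]
        ring
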